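/- Let B be a ball in ℝⁿ, ω ⊂ B a measurable subset of positive Lebesgue measure, and p a real polynomial of degree at most k in n variables. Then sup_B |p| ≤ T_k((1+β)/(1-β)) · sup_ω |p|, where β = (1 - |ω|/|B|)^{1/n} and T_k is the Chebyshev polynomial of degree k. In particular sup_B |p| ≤ (4n|B|/|ω|)^k sup_ω |p|. -/

import Mathlib

open MeasureTheory Metric Set

lemma bg_algebra (k : ℕ) (q : Polynomial ℝ) (hq : q.natDegree ≤ k) (e : ℕ → ℝ) (c X M : ℝ)
    (hc : 0 < c) (he0 : ∀ i ≤ k, 0 ≤ e i)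
    (he1 : ∀ i ≤ k, e i ≤ c * (X - Polynomial.Chebyshev.node k i))
    (he2 : ∀ i j, i < j → j ≤ k →
      c * (Polynomial.Chebyshev.node k i - Polynomial.Chebyshev.node k j) ≤ e j - e i)
    (hM : ∀ i ≤ k, |q.eval (e i)| ≤ M) :
    |q.eval 0| ≤ (Polynomial.Chebyshev.T ℝ (k : ℤ)).eval X * M := by
  classical
  open Polynomial Polynomial.Chebyshev in
  have hlag : ∀ (P : Polynomial ℝ) (v : ℕ → ℝ) (z : ℝ), P.natDegree ≤ k →
      Set.InjOn v (Finset.range (k+1)) →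
      P.eval z = ∑ i ∈ Finset.range (k+1), P.eval (v i) *
        ∏ j ∈ (Finset.range (k+1)).erase i, ((v i - v j)⁻¹ * (z - v j)) := by
    intro P v z hP hv
    have hd : P.degree < (Finset.range (k+1)).card := by
      rw [Finset.card_range]
      exact lt_of_le_of_lt Polynomial.degree_le_natDegree (by exact_mod_cast Nat.lt_succ_of_le hP)
    have h := congrArg (Polynomial.eval z) (Lagrange.eq_interpolate hv hd)
    rw [h, Lagrange.interpolate_apply, Polynomial.eval_finsetSum]
    refine Finset.sum_congr rfl fun i hi => ?_
    rw [Polynomial.eval_mul, Polynomial.eval_C, Lagrange.basis, Polynomial.eval_prod]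
    simp [Lagrange.basisDivisor]
  have hlt : ∀ i j, i < j → j ≤ k → e i < e j := by
    intro i j hij hj
    have h1 := Polynomial.Chebyshev.node_lt hj hij
    have h2 := he2 i j hij hj
    have h3 := mul_pos hc (sub_pos.2 h1)
    linarith
  have hinj : Set.InjOn e (Finset.range (k+1)) := by
    intro i hi j hj hij
    simp at hi hj
    rcases lt_trichotomy i j with h | h | h
    · exact absurd hij (hlt i j h (by omega)).ne
    · exact h
    · exact absurd hij (hlt j i h (by omega)).ne'
  have hM0 : 0 ≤ M := (abs_nonneg _).trans (hM 0 (Nat.zero_le _))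
  rw [hlag q e 0 hq hinj, hlag (Polynomial.Chebyshev.T ℝ (k:ℤ)) (Polynomial.Chebyshev.node k) X
    (by simp) (Polynomial.Chebyshev.strictAntiOn_node k).injOn, Finset.sum_mul]
  refine (Finset.abs_sum_le_sum_abs _ _).trans (Finset.sum_le_sum fun i hi => ?_)
  have hi' : i ≤ k := by simpa [Nat.lt_succ_iff] using hi
  rw [abs_mul, mul_comm _ M]
  have hT : (Polynomial.Chebyshev.T ℝ (k:ℤ)).eval (Polynomial.Chebyshev.node k i) *
      ∏ j ∈ (Finset.range (k+1)).erase i, ((Polynomial.Chebyshev.node k i -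
        Polynomial.Chebyshev.node k j)⁻¹ * (X - Polynomial.Chebyshev.node k j)) =
      ∏ j ∈ (Finset.range (k+1)).erase i, (|Polynomial.Chebyshev.node k i -
        Polynomial.Chebyshev.node k j|⁻¹ * (X - Polynomial.Chebyshev.node k j)) := by
    rw [Polynomial.Chebyshev.eval_T_real_node (by simpa using hi'), Finset.prod_mul_distrib,
      Finset.prod_mul_distrib, ← mul_assoc]
    congr 1
    have h := Polynomial.Chebyshev.zero_lt_prod_node_sub_node hi'
    rw [Finset.prod_inv_distrib, Finset.prod_inv_distrib, ← Finset.abs_prod]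
    have h2 := abs_of_pos h
    rw [abs_mul, abs_pow, abs_neg, abs_one, one_pow, one_mul] at h2
    rw [h2, mul_inv, ← inv_pow]
    norm_num
  rw [hT]
  refine mul_le_mul (hM i hi') ?_ (abs_nonneg _) hM0
  rw [Finset.abs_prod]
  refine Finset.prod_le_prod (fun _ _ => abs_nonneg _) fun j hj => ?_
  simp only [Finset.mem_erase, Finset.mem_range, Nat.lt_succ_iff] at hj
  obtain ⟨hji, hjk⟩ := hj
  rw [zero_sub, abs_mul, abs_neg, abs_of_nonneg (he0 j hjk), abs_inv]
  have key : c * |Polynomial.Chebyshev.node k i - Polynomial.Chebyshev.node k j| ≤ |e i - e j| := by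
    rcases lt_or_gt_of_ne hji with h | h
    · rw [abs_of_neg (sub_neg.2 (Polynomial.Chebyshev.node_lt hi' h)),
        abs_of_pos (sub_pos.2 (hlt j i h hi'))]
      have := he2 j i h hi'
      linarith
    · rw [abs_of_pos (sub_pos.2 (Polynomial.Chebyshev.node_lt hjk h)),
        abs_of_neg (sub_neg.2 (hlt i j h hjk))]
      have := he2 i j h hjk
      linarith
  have hpos : 0 < |Polynomial.Chebyshev.node k i - Polynomial.Chebyshev.node k j| := by
    rw [abs_pos, sub_ne_zero]
    rcases lt_or_gt_of_ne hji with h | h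
    · exact (Polynomial.Chebyshev.node_lt hi' h).ne
    · exact (Polynomial.Chebyshev.node_lt hjk h).ne'
  calc |e i - e j|⁻¹ * e j
      ≤ (c * |Polynomial.Chebyshev.node k i - Polynomial.Chebyshev.node k j|)⁻¹ *
          (c * (X - Polynomial.Chebyshev.node k j)) := by
        apply mul_le_mul _ (he1 j hjk) (he0 j hjk) (by positivity)
        exact inv_anti₀ (by positivity) key
    _ = _ := by field_simp

lemma bg_select (K : Set ℝ) (hK : IsCompact K) (hne : K.Nonempty) (τ : ℝ) (h0 : 0 ≤ τ)
    (h1 : τ ≤ volume.real K) :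
    ∃ e ∈ K, volume.real (K ∩ Ici e) = τ := by
  have hfin : ∀ s : Set ℝ, volume (K ∩ s) ≠ ⊤ := fun s =>
    ((measure_mono inter_subset_left).trans_lt hK.measure_lt_top).ne
  have hlip : ∀ a b : ℝ, a ≤ b → volume.real (K ∩ Ici a) ≤ volume.real (K ∩ Ici b) + (b - a) := by
    intro a b hab
    calc volume.real (K ∩ Ici a) ≤ volume.real ((K ∩ Ici b) ∪ Ico a b) := by
          apply measureReal_mono
          · intro z hz
            by_cases hzb : b ≤ z
            · exact Or.inl ⟨hz.1, hzb⟩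
            · exact Or.inr ⟨hz.2, not_le.1 hzb⟩
          · exact (measure_union_lt_top (lt_top_iff_ne_top.2 (hfin _)) (by simp)).ne
      _ ≤ _ := by
          refine (measureReal_union_le _ _).trans ?_
          simp [Real.volume_real_Ico_of_le hab]
  have hanti : ∀ a b : ℝ, a ≤ b → volume.real (K ∩ Ici b) ≤ volume.real (K ∩ Ici a) := by
    intro a b hab
    exact measureReal_mono (inter_subset_inter_right _ (Ici_subset_Ici.2 hab)) (hfin _)
  have hcont : Continuous fun a : ℝ => volume.real (K ∩ Ici a) := by
    apply LipschitzWith.continuous (K := 1)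
    apply LipschitzWith.of_dist_le_mul
    intro a b
    simp only [NNReal.coe_one, one_mul, Real.dist_eq]
    rcases le_total a b with h | h
    · rw [abs_of_nonneg (by linarith [hanti a b h]), abs_of_nonpos (by linarith)]
      linarith [hlip a b h]
    · rw [abs_of_nonpos (by linarith [hanti b a h]), abs_of_nonneg (by linarith)]
      linarith [hlip b a h]
  have hmin := hK.sInf_mem hne
  have hmax := hK.sSup_mem hne
  have hgmin : volume.real (K ∩ Ici (sInf K)) = volume.real K := by
    congr 1
    exact inter_eq_left.2 fun z hz => csInf_le hK.bddBelow hz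
  have hgmax : volume.real (K ∩ Ici (sSup K)) = 0 := by
    have : K ∩ Ici (sSup K) ⊆ {sSup K} := by
      intro z hz
      exact le_antisymm (le_csSup hK.bddAbove hz.1) hz.2
    have h := measure_mono_null this (μ := volume) (by simp)
    simp [measureReal_def, h]
  have hle : sInf K ≤ sSup K := csInf_le hK.bddBelow hmax
  obtain ⟨a, ha, hga⟩ : τ ∈ (fun a : ℝ => volume.real (K ∩ Ici a)) '' Icc (sInf K) (sSup K) := by
    apply intermediate_value_Icc' hle hcont.continuousOn
    simp only [mem_Icc]
    rw [hgmin, hgmax]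
    exact ⟨h0, h1⟩
  have hKa : IsCompact (K ∩ Ici a) := hK.inter_right isClosed_Ici
  have hKane : (K ∩ Ici a).Nonempty := ⟨_, hmax, ha.2⟩
  have hmem := hKa.sInf_mem hKane
  refine ⟨_, hmem.1, ?_⟩
  rw [← hga]
  simp only
  congr 1
  ext z
  constructor
  · rintro ⟨hz, hz2⟩
    exact ⟨hz, mem_Ici.2 (le_trans (mem_Ici.1 hmem.2) hz2)⟩
  · rintro hz
    exact ⟨hz.1, csInf_le hKa.bddBelow hz⟩

lemma bg_remez (k : ℕ) (q : Polynomial ℝ) (hq : q.natDegree ≤ k) (E : Set ℝ) (R μ M : ℝ)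
    (hR : 0 < R) (hμ : 0 < μ) (hE : E ⊆ Ioo 0 R) (hmeas : MeasurableSet E)
    (hvol : ENNReal.ofReal (μ * R) < volume E) (hM : ∀ z ∈ E, |q.eval z| ≤ M) :
    |q.eval 0| ≤ (Polynomial.Chebyshev.T ℝ (k : ℤ)).eval (2 / μ - 1) * M := by
  obtain ⟨K, hKE, hK, hKv⟩ := hmeas.exists_lt_isCompact hvol
  have hne : K.Nonempty := by
    rw [nonempty_iff_ne_empty]
    rintro rfl
    simp at hKv
  have hKv' : μ * R < volume.real K := by
    rw [measureReal_def]
    exact (ENNReal.ofReal_lt_iff_lt_toReal (by positivity) hK.measure_lt_top.ne).1 hKv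
  have hfin : ∀ s : Set ℝ, volume (K ∩ s) ≠ ⊤ := fun s =>
    ((measure_mono inter_subset_left).trans_lt hK.measure_lt_top).ne
  have hKR : volume.real K ≤ R := by
    have := measureReal_mono (μ := volume) (hKE.trans hE) (by simp)
    rwa [Real.volume_real_Ioo_of_le hR.le, sub_zero] at this
  have hnode : ∀ i, -1 ≤ Polynomial.Chebyshev.node k i ∧ Polynomial.Chebyshev.node k i ≤ 1 :=
    fun i => Polynomial.Chebyshev.node_mem_Icc
  have hsel : ∀ i, ∃ e ∈ K, volume.real (K ∩ Ici e) =
      μ * R / 2 * (1 + Polynomial.Chebyshev.node k i) := by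
    intro i
    apply bg_select K hK hne
    · have := (hnode i).1
      apply mul_nonneg (by positivity); linarith
    · have := (hnode i).2
      have : μ * R / 2 * (1 + Polynomial.Chebyshev.node k i) ≤ μ * R / 2 * 2 := by
        gcongr; linarith
      linarith
  choose e heK he using hsel
  have h0R : ∀ i, 0 < e i ∧ e i < R := fun i => hE (hKE (heK i))
  apply bg_algebra k q hq e (μ * R / 2) (2 / μ - 1) M (by positivity)
  · exact fun i _ => (h0R i).1.le
  · intro i _
    have h1 : volume.real (K ∩ Ici (e i)) ≤ R - e i := by
      have : K ∩ Ici (e i) ⊆ Icc (e i) R := fun z hz => ⟨hz.2, (hE (hKE hz.1)).2.le⟩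
      have := measureReal_mono (μ := volume) this (by simp)
      rwa [Real.volume_real_Icc_of_le (h0R i).2.le] at this
    rw [he] at h1
    have : μ * R / 2 * (2 / μ - 1 - Polynomial.Chebyshev.node k i) =
      R - μ * R / 2 * (1 + Polynomial.Chebyshev.node k i) := by field_simp; ring
    linarith
  · intro i j hij hj
    have hn := Polynomial.Chebyshev.node_lt hj hij
    have hg : volume.real (K ∩ Ici (e j)) < volume.real (K ∩ Ici (e i)) := by
      rw [he, he]
      have : 0 < μ * R / 2 := by positivity
      gcongr
    have hle : e i ≤ e j := by
      by_contra h
      push Not at h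
      have := measureReal_mono (μ := volume)
        (inter_subset_inter_right K (Ici_subset_Ici.2 h.le)) (hfin _)
      linarith
    have hlip : volume.real (K ∩ Ici (e i)) ≤ volume.real (K ∩ Ici (e j)) + (e j - e i) := by
      calc volume.real (K ∩ Ici (e i)) ≤ volume.real ((K ∩ Ici (e j)) ∪ Ico (e i) (e j)) := by
            apply measureReal_mono
            · intro z hz
              by_cases hzb : e j ≤ z
              · exact Or.inl ⟨hz.1, hzb⟩
              · exact Or.inr ⟨hz.2, not_le.1 hzb⟩
            · exact (measure_union_lt_top (lt_top_iff_ne_top.2 (hfin _)) (by simp)).ne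
        _ ≤ _ := by
            refine (measureReal_union_le _ _).trans ?_
            simp [Real.volume_real_Ico_of_le hle]
    rw [he, he] at hlip
    linarith
  · exact fun i _ => hM _ (hKE (heK i))

lemma bg_powint (d : ℕ) (a R : ℝ) (ha : 0 ≤ a) (haR : a ≤ R) :
    ∫⁻ r in Ioo a R, ENNReal.ofReal (r ^ d) =
      ENNReal.ofReal ((R ^ (d + 1) - a ^ (d + 1)) / (d + 1)) := by
  rw [Measure.restrict_congr_set Ioo_ae_eq_Ioc,
    ← ofReal_integral_eq_lintegral_ofReal (intervalIntegral.intervalIntegrable_pow _).1,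
    ← intervalIntegral.integral_of_le haR]
  · simp
  · filter_upwards [ae_restrict_mem measurableSet_Ioc] with y hy
    exact pow_nonneg (ha.trans hy.1.le) _

lemma bg_rearr (d : ℕ) (A : Set ℝ) (hA : MeasurableSet A) (R μ : ℝ) (hR : 0 < R) (hμ0 : 0 ≤ μ)
    (hμ1 : μ ≤ 1) (hAR : A ⊆ Ioo 0 R) (hv : volume A ≤ ENNReal.ofReal (μ * R)) :
    ∫⁻ r in A, ENNReal.ofReal (r ^ d) ≤
      ENNReal.ofReal (1 - (1 - μ) ^ (d + 1)) * ∫⁻ r in Ioo 0 R, ENNReal.ofReal (r ^ d) := by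
  set a := (1 - μ) * R with ha
  have ha0 : 0 ≤ a := mul_nonneg (by linarith) hR.le
  have haR : a ≤ R := by nlinarith
  have h1 : ENNReal.ofReal (1 - (1 - μ) ^ (d + 1)) * ∫⁻ r in Ioo 0 R, ENNReal.ofReal (r ^ d)
      = ∫⁻ r in Ioo a R, ENNReal.ofReal (r ^ d) := by
    rw [bg_powint d 0 R le_rfl hR.le, bg_powint d a R ha0 haR, ← ENNReal.ofReal_mul]
    · congr 1
      rw [ha, mul_pow]
      simp
      ring
    · have : (1 - μ) ^ (d + 1) ≤ 1 := pow_le_one₀ (by linarith) (by linarith)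
      linarith
  rw [h1]
  have hAfin : volume (A ∩ Ioo a R) ≠ ⊤ :=
    ((measure_mono inter_subset_left).trans_lt (hv.trans_lt ENNReal.ofReal_lt_top)).ne
  have hvol : volume (A \ Ioo a R) ≤ volume (Ioo a R \ A) := by
    have e1 : volume (A ∩ Ioo a R) + volume (A \ Ioo a R) = volume A :=
      measure_inter_add_sdiff A measurableSet_Ioo
    have e2 : volume (Ioo a R ∩ A) + volume (Ioo a R \ A) = volume (Ioo a R) :=
      measure_inter_add_sdiff _ hA
    rw [inter_comm, Real.volume_Ioo] at e2
    have e3 : R - a = μ * R := by rw [ha]; ring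
    rw [e3] at e2
    rw [← e1, ← e2] at hv
    exact (ENNReal.add_le_add_iff_left hAfin).1 hv
  calc ∫⁻ r in A, ENNReal.ofReal (r ^ d)
      = (∫⁻ r in A ∩ Ioo a R, ENNReal.ofReal (r ^ d)) + ∫⁻ r in A \ Ioo a R, ENNReal.ofReal (r ^ d) :=
        (lintegral_inter_add_sdiff (μ := volume) (fun r : ℝ => ENNReal.ofReal (r ^ d)) A measurableSet_Ioo).symm
    _ ≤ (∫⁻ r in A ∩ Ioo a R, ENNReal.ofReal (r ^ d)) + ENNReal.ofReal (a ^ d) * volume (A \ Ioo a R) := by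
        gcongr
        rw [← setLIntegral_const]
        apply setLIntegral_mono' (hA.diff measurableSet_Ioo)
        intro r hr
        apply ENNReal.ofReal_le_ofReal
        have h0 := hAR hr.1
        have : r ≤ a := by
          by_contra h
          push Not at h
          exact hr.2 ⟨h, h0.2⟩
        exact pow_le_pow_left₀ h0.1.le this _
    _ ≤ (∫⁻ r in A ∩ Ioo a R, ENNReal.ofReal (r ^ d)) + ENNReal.ofReal (a ^ d) * volume (Ioo a R \ A) := by
        gcongr
    _ ≤ (∫⁻ r in Ioo a R ∩ A, ENNReal.ofReal (r ^ d)) + ∫⁻ r in Ioo a R \ A, ENNReal.ofReal (r ^ d) := by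
        rw [inter_comm]
        gcongr
        rw [← setLIntegral_const]
        apply setLIntegral_mono' (measurableSet_Ioo.diff hA)
        intro r hr
        apply ENNReal.ofReal_le_ofReal
        exact pow_le_pow_left₀ ha0 hr.1.1.le _
    _ = _ := lintegral_inter_add_sdiff (μ := volume) (fun r : ℝ => ENNReal.ofReal (r ^ d)) (Ioo a R) hA

lemma bg_polar {V : Type*} [NormedAddCommGroup V] [NormedSpace ℝ V] [MeasureSpace V]
    [BorelSpace V] [FiniteDimensional ℝ V] [Nontrivial V]
    [(volume : Measure V).IsAddHaarMeasure] {n : ℕ} (hdim : Module.finrank ℝ V = n) (y : V)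
    (S : Set (V)) (hS : MeasurableSet S) :
    volume S = ∫⁻ θ : sphere (0 : V) 1,
      (∫⁻ r in {r : ℝ | 0 < r ∧ y + r • θ.1 ∈ S}, ENNReal.ofReal (r ^ (n - 1)))
      ∂(volume : Measure (V)).toSphere := by
  set S' : Set V := (fun z => y + z) ⁻¹' S with hS'
  have hS'm : MeasurableSet S' := hS.preimage (measurable_const_add y)
  have e1 : volume S = volume S' := (measure_preimage_add volume y S).symm
  have e2 : volume S' = (volume.comap (Subtype.val : ({0}ᶜ : Set V) → V)) (Subtype.val ⁻¹' S') := by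
    rw [comap_subtype_coe_apply (measurableSet_singleton _).compl, Subtype.image_preimage_coe,
      inter_comm, ← Set.sdiff_eq, measure_sdiff_null (measure_singleton _)]
  have hmp := (volume : Measure V).measurePreserving_homeomorphUnitSphereProd
  set W : Set (sphere (0 : V) 1 × Ioi (0 : ℝ)) := {w | w.2.1 • w.1.1 ∈ S'} with hW
  have hWm : MeasurableSet W := by
    apply hS'm.preimage
    fun_prop
  have e3 : (Subtype.val : ({0}ᶜ : Set V) → V) ⁻¹' S' = homeomorphUnitSphereProd V ⁻¹' W := by
    ext z
    simp only [hW, mem_preimage, mem_ofPred_eq]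
    have : z.1 = (homeomorphUnitSphereProd V z).2.1 • (homeomorphUnitSphereProd V z).1.1 := by
      have hz : z.1 ≠ 0 := z.2
      simp [smul_smul, mul_inv_cancel₀ (norm_ne_zero_iff.2 hz)]
    rw [← this]
  rw [e1, e2, e3, hmp.measure_preimage hWm.nullMeasurableSet, Measure.prod_apply hWm, hdim]
  refine lintegral_congr fun θ => ?_
  have hsec : MeasurableSet (Prod.mk θ ⁻¹' W) := measurable_prodMk_left hWm
  rw [Measure.volumeIoiPow, withDensity_apply _ hsec,
    setLIntegral_subtype measurableSet_Ioi _ fun a : ℝ ↦ .ofReal (a ^ (n-1))]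
  congr 2
  ext r
  simp [hW, hS', and_comm]

lemma bg_ray {V : Type*} [NormedAddCommGroup V] [NormedSpace ℝ V] (x y : V) (t : ℝ)
    (hy : y ∈ ball x t) (θ : sphere (0 : V) 1) :
    ∃ R, 0 < R ∧ {r : ℝ | 0 < r ∧ y + r • θ.1 ∈ ball x t} = Ioo 0 R := by
  set D := {r : ℝ | 0 < r ∧ y + r • θ.1 ∈ ball x t} with hD
  have hθ : ‖θ.1‖ = 1 := by simp
  have hcont : Continuous fun r : ℝ => y + r • θ.1 := by fun_prop
  have hopen : IsOpen ((fun r : ℝ => y + r • θ.1) ⁻¹' ball x t) := isOpen_ball.preimage hcont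
  have hconv : ∀ r s : ℝ, 0 ≤ s → s ≤ r → y + r • θ.1 ∈ ball x t → y + s • θ.1 ∈ ball x t := by
    intro r s hs hsr hr
    rcases eq_or_lt_of_le (hs.trans hsr) with h | h
    · have : s = 0 := by linarith
      simpa [this] using hy
    have hc := (convex_ball x t) hy hr (a := 1 - s / r) (b := s / r)
      (by rw [sub_nonneg, div_le_one h]; exact hsr) (by positivity) (by ring)
    have heq : (1 - s / r) • y + (s / r) • (y + r • θ.1) = y + s • θ.1 := by
      rw [smul_add, smul_smul, div_mul_cancel₀ _ h.ne', sub_smul, one_smul]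
      abel
    rwa [heq] at hc
  have hbdd : BddAbove D := by
    refine ⟨2 * t, fun r hr => ?_⟩
    have h1 : ‖r • θ.1‖ = r := by rw [norm_smul, hθ, mul_one, Real.norm_of_nonneg hr.1.le]
    have h2 : dist (y + r • θ.1) y = r := by rw [dist_eq_norm, add_sub_cancel_left, h1]
    have h3 := dist_triangle_right (y + r • θ.1) y x
    have h4 := mem_ball.1 hr.2
    have h5 := mem_ball.1 hy
    linarith
  have hup : ∀ r : ℝ, 0 ≤ r → y + r • θ.1 ∈ ball x t → ∃ s ∈ D, r < s := by
    intro r hr hrb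
    obtain ⟨ε, hε, hb⟩ := Metric.isOpen_iff.1 hopen r hrb
    refine ⟨r + ε / 2, ⟨by linarith, hb ?_⟩, by linarith⟩
    rw [mem_ball, Real.dist_eq, add_sub_cancel_left, abs_of_pos (by linarith)]
    linarith
  obtain ⟨s0, hs0, hs0'⟩ := hup 0 le_rfl (by simpa using hy)
  refine ⟨sSup D, hs0'.trans_le (le_csSup hbdd hs0), ?_⟩
  ext r
  constructor
  · intro hr
    obtain ⟨s, hs, hrs⟩ := hup r hr.1.le hr.2
    exact ⟨hr.1, hrs.trans_le (le_csSup hbdd hs)⟩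
  · rintro ⟨hr0, hr⟩
    obtain ⟨s, hs, hrs⟩ := exists_lt_of_lt_csSup ⟨s0, hs0⟩ hr
    exact ⟨hr0, hconv s r hr0.le hrs.le hs.2⟩

lemma bg_exists_ray {n : ℕ} (hn : 0 < n) (x y : EuclideanSpace ℝ (Fin n)) (t : ℝ)
    (hy : y ∈ ball x t) (ω : Set (EuclideanSpace ℝ (Fin n)))
    (hω : ω ⊆ ball x t) (hmeas : MeasurableSet ω) (μ : ℝ) (hμ0 : 0 ≤ μ) (hμ1 : μ ≤ 1)
    (hlt : ENNReal.ofReal (1 - (1 - μ) ^ n) * volume (ball x t) < volume ω) :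
    ∃ (θ : EuclideanSpace ℝ (Fin n)) (R : ℝ), 0 < R ∧
      {r : ℝ | 0 < r ∧ y + r • θ ∈ ω} ⊆ Ioo 0 R ∧
      MeasurableSet {r : ℝ | 0 < r ∧ y + r • θ ∈ ω} ∧
      ENNReal.ofReal (μ * R) < volume {r : ℝ | 0 < r ∧ y + r • θ ∈ ω} := by
  by_contra hcon
  push Not at hcon
  refine absurd hlt (not_lt.2 ?_)
  have : Nonempty (Fin n) := ⟨⟨0, hn⟩⟩
  have hdim : Module.finrank ℝ (EuclideanSpace ℝ (Fin n)) = n := by simp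
  rw [bg_polar hdim y ω hmeas, bg_polar hdim y (ball x t) measurableSet_ball,
    ← lintegral_const_mul' _ _ ENNReal.ofReal_ne_top]
  refine lintegral_mono fun θ => ?_
  obtain ⟨R, hR, hRe⟩ := bg_ray x y t hy θ
  have hsub : {r : ℝ | 0 < r ∧ y + r • θ.1 ∈ ω} ⊆ Ioo 0 R := by
    rw [← hRe]
    exact fun r hr => ⟨hr.1, hω hr.2⟩
  have hm : MeasurableSet {r : ℝ | 0 < r ∧ y + r • θ.1 ∈ ω} := by
    apply MeasurableSet.inter measurableSet_Ioi
    exact hmeas.preimage (by fun_prop : Measurable fun r : ℝ => y + r • θ.1)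
  have h := bg_rearr (n - 1) _ hm R μ hR hμ0 hμ1 hsub (hcon θ.1 R hR hsub hm)
  simp only
  rw [hRe]
  rwa [Nat.sub_add_cancel hn] at h

lemma bg_T_le (k : ℕ) (X : ℝ) (hX : 1 ≤ X) :
    (Polynomial.Chebyshev.T ℝ (k : ℤ)).eval X ≤ (2 * X) ^ k := by
  have hu : 0 ≤ Real.arcosh X := Real.arcosh_nonneg hX
  conv_lhs => rw [← Real.cosh_arcosh hX]
  conv_rhs => rw [← Real.cosh_arcosh hX]
  rw [Polynomial.Chebyshev.T_real_cosh]
  set u := Real.arcosh X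
  have h1 : Real.cosh (((k : ℤ) : ℝ) * u) ≤ Real.exp (k * u) := by
    rw [Real.cosh_eq]
    have : Real.exp (-(((k : ℤ) : ℝ) * u)) ≤ Real.exp (((k : ℤ) : ℝ) * u) := by
      apply Real.exp_le_exp.2
      have : 0 ≤ ((k : ℤ) : ℝ) * u := mul_nonneg (by simp) hu
      linarith
    simp only [Int.cast_natCast] at this ⊢
    linarith
  refine h1.trans ?_
  rw [Real.exp_nat_mul]
  apply pow_le_pow_left₀ (Real.exp_pos _).le
  rw [Real.cosh_eq]
  have := Real.exp_pos (-u)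
  linarith

lemma bg_line {n : ℕ} (k : ℕ) (p : MvPolynomial (Fin n) ℝ) (hp : p.totalDegree ≤ k)
    (y θ : EuclideanSpace ℝ (Fin n)) :
    ∃ q : Polynomial ℝ, q.natDegree ≤ k ∧
      ∀ r : ℝ, q.eval r = MvPolynomial.eval (fun i => (y + r • θ) i) p := by
  refine ⟨MvPolynomial.aeval (fun i => Polynomial.C (θ i) * Polynomial.X + Polynomial.C (y i)) p,
    ?_, fun r => ?_⟩
  · simpa using MvPolynomial.aeval_natDegree_le (n := 1) p hp
      (fun i => Polynomial.C (θ i) * Polynomial.X + Polynomial.C (y i))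
      (fun i => Polynomial.natDegree_linear_le)
  · rw [← Polynomial.coe_evalRingHom, MvPolynomial.aeval_def, MvPolynomial.hom_eval₂]
    rw [MvPolynomial.eval, MvPolynomial.coe_eval₂Hom]
    congr 1
    · ext; simp
    · ext i; simp; ring

/-- The **Brudnyi–Ganzburg inequality**: for a ball `B ⊂ ℝⁿ`, a measurable
`ω ⊂ B` of positive measure and a real polynomial `p` of degree at most `k`,
`sup_B |p| ≤ T_k((1+β)/(1-β)) · sup_ω |p|` with
`β = (1 - |ω|/|B|)^{1/n}`; in particular `sup_B |p| ≤ (4n|B|/|ω|)^k sup_ω |p|`. -/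
theorem brudnyi_ganzburg (n k : ℕ) (hn : 0 < n) (x : EuclideanSpace ℝ (Fin n))
    (t : ℝ) (ht : 0 < t) (ω : Set (EuclideanSpace ℝ (Fin n)))
    (hω : ω ⊆ ball x t) (hmeas : MeasurableSet ω) (hpos : 0 < volume ω)
    (p : MvPolynomial (Fin n) ℝ) (hp : p.totalDegree ≤ k) :
    (∀ y ∈ ball x t,
      |MvPolynomial.eval (fun i => y i) p| ≤
        (Polynomial.Chebyshev.T ℝ (k : ℤ)).eval
            ((1 + (1 - (volume ω).toReal / (volume (ball x t)).toReal) ^ ((1 : ℝ) / n)) /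
             (1 - (1 - (volume ω).toReal / (volume (ball x t)).toReal) ^ ((1 : ℝ) / n))) *
          sSup ((fun z => |MvPolynomial.eval (fun i => z i) p|) '' ω)) ∧
    ∀ y ∈ ball x t,
      |MvPolynomial.eval (fun i => y i) p| ≤
        (4 * n * (volume (ball x t)).toReal / (volume ω).toReal) ^ k *
          sSup ((fun z => |MvPolynomial.eval (fun i => z i) p|) '' ω) := by
  set M := sSup ((fun z : EuclideanSpace ℝ (Fin n) => |MvPolynomial.eval (fun i => z i) p|) '' ω)
    with hMdef
  have hBfin : volume (ball x t) ≠ ⊤ := measure_ball_lt_top.ne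
  have hωB : volume ω ≤ volume (ball x t) := measure_mono hω
  have hωfin : volume ω ≠ ⊤ := (hωB.trans_lt measure_ball_lt_top).ne
  set b := (volume (ball x t)).toReal with hb
  set w := (volume ω).toReal with hw
  have hw0 : 0 < w := ENNReal.toReal_pos hpos.ne' hωfin
  have hwb : w ≤ b := ENNReal.toReal_mono hBfin hωB
  have hb0 : 0 < b := hw0.trans_le hwb
  have hs0 : 0 ≤ 1 - w / b := by rw [sub_nonneg, div_le_one hb0]; exact hwb
  have hs1 : 1 - w / b < 1 := by have := div_pos hw0 hb0; linarith
  set β := (1 - w / b) ^ ((1 : ℝ) / n) with hβ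
  have hn' : (0 : ℝ) < n := Nat.cast_pos.2 hn
  have hβ0 : 0 ≤ β := Real.rpow_nonneg hs0 _
  have hβn : β ^ n = 1 - w / b := by
    rw [hβ, one_div]; exact Real.rpow_inv_natCast_pow hs0 hn.ne'
  have hβ1 : β < 1 := Real.rpow_lt_one hs0 hs1 (by positivity)
  have hcontp : Continuous fun z : EuclideanSpace ℝ (Fin n) =>
      |MvPolynomial.eval (fun i => z i) p| := by
    refine (MvPolynomial.continuous_eval p |>.comp ?_).abs
    fun_prop
  have hbdd : BddAbove ((fun z : EuclideanSpace ℝ (Fin n) =>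
      |MvPolynomial.eval (fun i => z i) p|) '' ω) :=
    ((isCompact_closedBall x t).bddAbove_image hcontp.continuousOn).mono
      (image_mono (hω.trans ball_subset_closedBall))
  have hM : ∀ z ∈ ω, |MvPolynomial.eval (fun i => z i) p| ≤ M := fun z hz =>
    le_csSup hbdd ⟨z, hz, rfl⟩
  have hM0 : 0 ≤ M := by
    apply Real.sSup_nonneg
    rintro _ ⟨z, _, rfl⟩
    exact abs_nonneg _
  have main : ∀ y ∈ ball x t, |MvPolynomial.eval (fun i => y i) p| ≤
        (Polynomial.Chebyshev.T ℝ (k : ℤ)).eval ((1 + β) / (1 - β)) * M := by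
    intro y hy
    have hstep : ∀ μ ∈ Ioo 0 (1 - β), |MvPolynomial.eval (fun i => y i) p| ≤
        (Polynomial.Chebyshev.T ℝ (k : ℤ)).eval (2 / μ - 1) * M := by
      rintro μ ⟨hμ0, hμ1⟩
      have hlt : ENNReal.ofReal (1 - (1 - μ) ^ n) * volume (ball x t) < volume ω := by
        rw [← ENNReal.ofReal_toReal hBfin, ← ENNReal.ofReal_toReal hωfin, ← hb, ← hw,
          ← ENNReal.ofReal_mul' hb0.le]
        rw [ENNReal.ofReal_lt_ofReal_iff hw0]
        have h1 : β ^ n < (1 - μ) ^ n := pow_lt_pow_left₀ (by linarith) hβ0 hn.ne'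
        rw [hβn] at h1
        have h2 : 1 - (1 - μ) ^ n < w / b := by linarith
        rwa [lt_div_iff₀ hb0] at h2
      obtain ⟨θ, R, hR, hsub, hm, hv⟩ :=
        bg_exists_ray hn x y t hy ω hω hmeas μ hμ0.le (by linarith) hlt
      obtain ⟨q, hq, hqe⟩ := bg_line k p hp y θ
      have h := bg_remez k q hq _ R μ M hR hμ0 hsub hm hv (fun r hr => by
        rw [hqe]; exact hM _ hr.2)
      rw [hqe] at h
      simpa using h
    have h1β : 0 < 1 - β := by linarith
    have heq : (1 + β) / (1 - β) = 2 / (1 - β) - 1 := by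
      have : 1 - β ≠ 0 := by linarith
      field_simp; ring
    rw [heq]
    have hc : ContinuousAt (fun μ : ℝ =>
        (Polynomial.Chebyshev.T ℝ (k : ℤ)).eval (2 / μ - 1) * M) (1 - β) := by
      apply ContinuousAt.mul _ continuousAt_const
      apply ContinuousAt.comp (Polynomial.continuous _).continuousAt
      apply ContinuousAt.sub _ continuousAt_const
      exact continuousAt_const.div continuousAt_id h1β.ne'
    refine ge_of_tendsto (hc.tendsto.mono_left (nhdsWithin_le_nhds (s := Iio (1 - β)))) ?_
    filter_upwards [Ioo_mem_nhdsLT (by linarith : (0 : ℝ) < 1 - β)] with μ hμ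
    exact hstep μ hμ
  refine ⟨main, fun y hy => (main y hy).trans ?_⟩
  refine mul_le_mul_of_nonneg_right ?_ hM0
  have h1β : 0 < 1 - β := by linarith
  have hX : 1 ≤ (1 + β) / (1 - β) := by rw [le_div_iff₀ h1β]; linarith
  refine (bg_T_le k _ hX).trans (pow_le_pow_left₀ (by linarith) ?_ _)
  have hbern := one_add_mul_le_pow (a := β - 1) (by linarith) n
  rw [add_sub_cancel, hβn] at hbern
  have h3 : w / b ≤ n * (1 - β) := by linarith
  have h4 : w ≤ n * (1 - β) * b := by rwa [div_le_iff₀ hb0] at h3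
  rw [le_div_iff₀ hw0, mul_div_assoc', div_mul_eq_mul_div, div_le_iff₀ h1β]
  calc 2 * (1 + β) * w ≤ 2 * 2 * w := by gcongr; linarith
    _ ≤ 2 * 2 * (n * (1 - β) * b) := by gcongr
    _ = _ := by ring
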